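/- Let D be a simple x-monotone drawing of K_n with n ≥ 3, let U ⊆ ℝ² be the union of all edge arcs of D, and let x ∈ ℝ² \ U be a point whose connected component in ℝ² \ U is bounded. Then there exist indices a < b < c such that x lies in a bounded connected component of ℝ² \ T_{abc}, where T_{abc} is the union of the arcs of the three edges {a,b}, {b,c}, {a,c} (i.e., x lies in the interior of the triangle v_a v_b v_c). -/

import Mathlib

/-- `Zval n` is Hill's conjectured value
`Z(n) = (1/4)⌊n/2⌋⌊(n−1)/2⌋⌊(n−2)/2⌋⌊(n−3)/2⌋` for the crossing number of `K n`.
(The product of the four floors is always divisible by 4, so natural division is exact.) -/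
def Zval (n : ℕ) : ℕ :=
  n / 2 * ((n - 1) / 2) * ((n - 2) / 2) * ((n - 3) / 2) / 4

/-- An x-monotone drawing of the complete graph `K n`: vertices `v i = (x i, 0)` with
`x` strictly increasing, and for each pair `i < j` a continuous function `e i j` on
`[x i, x j]` vanishing at the endpoints, whose graph is the arc of the edge `{i, j}`.
Edges avoid the intermediate vertices, any two distinct edges meet in finitely many
interior parameters, and at each such common point the difference changes sign
(a proper crossing). -/
structure XMonotoneDrawing (n : ℕ) where
  x : Fin n → ℝ
  x_strictMono : StrictMono x
  e : Fin n → Fin n → ℝ → ℝ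
  cont : ∀ i j : Fin n, i < j → ContinuousOn (e i j) (Set.Icc (x i) (x j))
  end_left : ∀ i j : Fin n, i < j → e i j (x i) = 0
  end_right : ∀ i j : Fin n, i < j → e i j (x j) = 0
  avoid_vertex : ∀ i m j : Fin n, i < m → m < j → e i j (x m) ≠ 0
  cross_finite : ∀ i j k l : Fin n, i < j → k < l → (i, j) ≠ (k, l) →
    {t : ℝ | max (x i) (x k) < t ∧ t < min (x j) (x l) ∧ e i j t = e k l t}.Finite
  sign_change : ∀ i j k l : Fin n, i < j → k < l → (i, j) ≠ (k, l) →
    ∀ t : ℝ, max (x i) (x k) < t → t < min (x j) (x l) → e i j t = e k l t →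
      ∃ ε > (0 : ℝ), ∀ s : ℝ, max (x i) (x k) < s → t - ε < s → s < t →
        ∀ u : ℝ, u < min (x j) (x l) → t < u → u < t + ε →
          (e i j s - e k l s) * (e i j u - e k l u) < 0

namespace XMonotoneDrawing

variable {n : ℕ}

/-- The set of parameters at which the edges `{i,j}` and `{k,l}` cross
(both edges are parametrized over the `x`-axis). -/
def crossSet (D : XMonotoneDrawing n) (i j k l : Fin n) : Set ℝ :=
  {t : ℝ | max (D.x i) (D.x k) < t ∧ t < min (D.x j) (D.x l) ∧ D.e i j t = D.e k l t}

/-- The number of crossings between the edges `{i,j}` and `{k,l}`. -/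
noncomputable def crossCount (D : XMonotoneDrawing n) (i j k l : Fin n) : ℕ :=
  (D.crossSet i j k l).ncard

/-- Two edges `{i,j}` and `{k,l}` are adjacent if they share an endpoint index. -/
def Adj (i j k l : Fin n) : Prop := i = k ∨ i = l ∨ j = k ∨ j = l

/-- A drawing is semisimple if no two adjacent edges cross. -/
def Semisimple (D : XMonotoneDrawing n) : Prop :=
  ∀ i j k l : Fin n, i < j → k < l → (i, j) ≠ (k, l) → Adj i j k l →
    D.crossCount i j k l = 0

/-- A drawing is weakly semisimple if every two adjacent edges cross an even
number of times. -/
def WeaklySemisimple (D : XMonotoneDrawing n) : Prop :=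
  ∀ i j k l : Fin n, i < j → k < l → (i, j) ≠ (k, l) → Adj i j k l →
    Even (D.crossCount i j k l)

/-- A drawing is simple if no two adjacent edges cross and every two non-adjacent
edges cross at most once. -/
def Simple (D : XMonotoneDrawing n) : Prop :=
  ∀ i j k l : Fin n, i < j → k < l → (i, j) ≠ (k, l) →
    (Adj i j k l → D.crossCount i j k l = 0) ∧
    (¬ Adj i j k l → D.crossCount i j k l ≤ 1)

/-- `cr D`: the total number of crossings of `D`. (Each unordered pair of distinct
edges is counted twice in the sum, whence the division by 2; `crossCount` is
symmetric in the two edges.) -/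
noncomputable def cr (D : XMonotoneDrawing n) : ℕ :=
  (∑ p : (Fin n × Fin n) × (Fin n × Fin n),
      if p.1.1 < p.1.2 ∧ p.2.1 < p.2.2 ∧ p.1 ≠ p.2 then
        D.crossCount p.1.1 p.1.2 p.2.1 p.2.2
      else 0) / 2

/-- `ocr D`: the number of unordered pairs of edges of `D` crossing an odd number
of times. (Each unordered pair appears twice as an ordered pair.) -/
noncomputable def ocr (D : XMonotoneDrawing n) : ℕ :=
  {p : (Fin n × Fin n) × (Fin n × Fin n) |
    p.1.1 < p.1.2 ∧ p.2.1 < p.2.2 ∧ p.1 ≠ p.2 ∧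
      Odd (D.crossCount p.1.1 p.1.2 p.2.1 p.2.2)}.ncard / 2

/-- The signature of the triple `i < j < k`: `true` (i.e. `+`) if the vertex `v j`
lies below the edge `{i, k}`, i.e. `e i k (x j) > 0`, and `false` (i.e. `−`) otherwise. -/
noncomputable def sig (D : XMonotoneDrawing n) (i j k : Fin n) : Bool :=
  if 0 < D.e i k (D.x j) then true else false

/-- `D` realizes the signature function `σ` if `σ_D` and `σ` agree on all
increasing triples. -/
def Realizes (D : XMonotoneDrawing n) (σ : Fin n → Fin n → Fin n → Bool) : Prop :=
  ∀ i j k : Fin n, i < j → j < k → D.sig i j k = σ i j k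

/-- A drawing is pseudolinear if its edges extend to continuous curves over all of `ℝ`
that avoid all vertices other than their endpoints and such that any two of these
extended curves cross exactly once (the crossing being a sign change of the difference). -/
def Pseudolinear (D : XMonotoneDrawing n) : Prop :=
  ∃ p : Fin n → Fin n → ℝ → ℝ,
    (∀ i j : Fin n, i < j → Continuous (p i j)) ∧
    (∀ i j : Fin n, i < j → ∀ t ∈ Set.Icc (D.x i) (D.x j), p i j t = D.e i j t) ∧
    (∀ i j m : Fin n, i < j → m ≠ i → m ≠ j → p i j (D.x m) ≠ 0) ∧
    (∀ i j k l : Fin n, i < j → k < l → (i, j) ≠ (k, l) →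
      ∃ t : ℝ, p i j t = p k l t ∧
        ∀ s u : ℝ, s < t → t < u →
          (p i j s - p k l s) * (p i j u - p k l u) < 0)

/-- The arc of the edge `{i, j}` as a subset of the plane `ℝ × ℝ`. -/
def edgeArc (D : XMonotoneDrawing n) (i j : Fin n) : Set (ℝ × ℝ) :=
  {q : ℝ × ℝ | D.x i ≤ q.1 ∧ q.1 ≤ D.x j ∧ q.2 = D.e i j q.1}

/-- The union of all edge arcs of the drawing. -/
def arcUnion (D : XMonotoneDrawing n) : Set (ℝ × ℝ) :=
  ⋃ i : Fin n, ⋃ j : Fin n, ⋃ (_ : i < j), D.edgeArc i j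

end XMonotoneDrawing

namespace Sig

variable {n : ℕ}

/-- With respect to a signature function `σ`, the vertex `m ∉ {i, j}` is on the left of
the directed edge `(i, j)` (where `i < j`). -/
def LeftOf (σ : Fin n → Fin n → Fin n → Bool) (i j m : Fin n) : Prop :=
  (i < m ∧ m < j ∧ σ i m j = false) ∨ (m < i ∧ σ m i j = true) ∨ (j < m ∧ σ i j m = true)

/-- The number of vertices on the left of the directed edge `(i, j)`. -/
noncomputable def leftCount (σ : Fin n → Fin n → Fin n → Bool) (i j : Fin n) : ℕ :=
  {m : Fin n | LeftOf σ i j m}.ncard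

/-- The edge `{i, j}` (with `i < j`) is a `k`-edge of `σ` if `min(ℓ, n − 2 − ℓ) = k`,
where `ℓ` is the number of vertices on its left. -/
def IsKEdge (σ : Fin n → Fin n → Fin n → Bool) (k : ℕ) (i j : Fin n) : Prop :=
  min (leftCount σ i j) (n - 2 - leftCount σ i j) = k

/-- `Ek σ k`: the number of `k`-edges of `σ`. -/
noncomputable def Ek (σ : Fin n → Fin n → Fin n → Bool) (k : ℕ) : ℕ :=
  {p : Fin n × Fin n | p.1 < p.2 ∧ IsKEdge σ k p.1 p.2}.ncard

/-- `Ele σ k = E_{≤k}(σ)`: the number of `≤k`-edges of `σ`. -/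
noncomputable def Ele (σ : Fin n → Fin n → Fin n → Bool) (k : ℕ) : ℕ :=
  ∑ i ∈ Finset.range (k + 1), Ek σ i

/-- `Elele σ k = E_{≤≤k}(σ) = Σ_{j=0}^{k} E_{≤j}(σ)`. -/
noncomputable def Elele (σ : Fin n → Fin n → Fin n → Bool) (k : ℕ) : ℕ :=
  ∑ j ∈ Finset.range (k + 1), Ele σ j

/-- `E_{≤≤k}` with an integer index, which vanishes for negative `k`. -/
noncomputable def ElelZ (σ : Fin n → Fin n → Fin n → Bool) (k : ℤ) : ℕ :=
  if 0 ≤ k then Elele σ k.toNat else 0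

/-- The left count of the edge `{i, j}` in the drawing restricted to the first
`n − 1` vertices (the last vertex deleted). -/
noncomputable def leftCountRes (σ : Fin n → Fin n → Fin n → Bool) (i j : Fin n) : ℕ :=
  {m : Fin n | LeftOf σ i j m ∧ (m : ℕ) + 1 < n}.ncard

/-- The edge `{i, j}` is a `k`-edge of the restriction of `σ` to the first `n − 1`
vertices (there `min(ℓ', (n−1) − 2 − ℓ') = k`). -/
def IsKEdgeRes (σ : Fin n → Fin n → Fin n → Bool) (k : ℕ) (i j : Fin n) : Prop :=
  min (leftCountRes σ i j) (n - 3 - leftCountRes σ i j) = k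

/-- The edge `{i, j}` is a `(D,D')`-invariant `≤k`-edge: it avoids the last vertex and
is an `m`-edge with `m ≤ k` both in `σ` and in the restriction of `σ` to the first
`n − 1` vertices. -/
def InvariantLeK (σ : Fin n → Fin n → Fin n → Bool) (k : ℕ) (i j : Fin n) : Prop :=
  (j : ℕ) + 1 < n ∧ (∃ m ≤ k, IsKEdge σ m i j) ∧ (∃ m ≤ k, IsKEdgeRes σ m i j)

/-- The ten 4-tuple forms allowed in signature functions of semisimple x-monotone
drawings: `++++, −−−−, ++−−, −−++, −++−, +−−+, −−−+, +++−, +−−−, −+++`. -/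
def AllowedForm (a b c d : Bool) : Prop :=
  (a, b, c, d) ∈ ([(true, true, true, true), (false, false, false, false),
    (true, true, false, false), (false, false, true, true),
    (false, true, true, false), (true, false, false, true),
    (false, false, false, true), (true, true, true, false),
    (true, false, false, false), (false, true, true, true)] :
      List (Bool × Bool × Bool × Bool))

/-- A signature function is admissible if every increasing 4-tuple is of one of the
ten allowed forms. -/
def Admissible (σ : Fin n → Fin n → Fin n → Bool) : Prop :=
  ∀ a b c d : Fin n, a < b → b < c → c < d →
    AllowedForm (σ a b c) (σ a b d) (σ a c d) (σ b c d)

/-- The six convex forms: `++++, −−−−, ++−−, −−++, −++−, +−−+`. -/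
def ConvexForm (a b c d : Bool) : Prop :=
  (a, b, c, d) ∈ ([(true, true, true, true), (false, false, false, false),
    (true, true, false, false), (false, false, true, true),
    (false, true, true, false), (true, false, false, true)] :
      List (Bool × Bool × Bool × Bool))

/-- The 4-tuple `a < b < c < d` is convex in `σ`. -/
def Convex4 (σ : Fin n → Fin n → Fin n → Bool) (a b c d : Fin n) : Prop :=
  ConvexForm (σ a b c) (σ a b d) (σ a c d) (σ b c d)

/-- The eight 4-tuple forms of pseudolinear x-monotone drawings (the sign-monotone
sequences): `++++, +++−, ++−−, +−−−, −−−−, −−−+, −−++, −+++`. -/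
def PLForm (a b c d : Bool) : Prop :=
  (a, b, c, d) ∈ ([(true, true, true, true), (true, true, true, false),
    (true, true, false, false), (true, false, false, false),
    (false, false, false, false), (false, false, false, true),
    (false, false, true, true), (false, true, true, true)] :
      List (Bool × Bool × Bool × Bool))

/-- The relation `j ⋖ k` on `{j : i < j}`: `j ⋖ k` iff (`j < k` and `σ i j k = +`)
or (`k < j` and `σ i k j = −`). -/
def Below (σ : Fin n → Fin n → Fin n → Bool) (i j k : Fin n) : Prop :=
  (j < k ∧ σ i j k = true) ∨ (k < j ∧ σ i k j = false)

end Sig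

/-- If the graphs of two continuous functions `g` and `h` over `[α, β]` agree at both ends and are
contained in `T`, then every point strictly between them lies in a bounded component of `Tᶜ`. -/
theorem isBounded_connectedComponentIn_of_between {α β : ℝ} {g h : ℝ → ℝ}
    (hg : Continuous g) (hh : Continuous h) (hα : g α = h α) (hβ : g β = h β)
    {T : Set (ℝ × ℝ)} (hgT : ∀ t ∈ Set.Icc α β, (t, g t) ∈ T)
    (hhT : ∀ t ∈ Set.Icc α β, (t, h t) ∈ T) {p : ℝ × ℝ} (hp : p ∉ T)
    (hpα : α ≤ p.1) (hpβ : p.1 ≤ β) (hgp : g p.1 < p.2) (hph : p.2 < h p.1) :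
    Bornology.IsBounded (connectedComponentIn Tᶜ p) := by
  set R : Set (ℝ × ℝ) := {q | α < q.1 ∧ q.1 < β ∧ g q.1 < q.2 ∧ q.2 < h q.1}
  set K : Set (ℝ × ℝ) := {q | α ≤ q.1 ∧ q.1 ≤ β ∧ g q.1 ≤ q.2 ∧ q.2 ≤ h q.1}
  have hRo : IsOpen R :=
    (isOpen_lt continuous_const continuous_fst).inter
      ((isOpen_lt continuous_fst continuous_const).inter
        ((isOpen_lt (hg.comp continuous_fst) continuous_snd).inter
          (isOpen_lt continuous_snd (hh.comp continuous_fst))))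
  have hKc : IsClosed K :=
    (isClosed_le continuous_const continuous_fst).inter
      ((isClosed_le continuous_fst continuous_const).inter
        ((isClosed_le (hg.comp continuous_fst) continuous_snd).inter
          (isClosed_le continuous_snd (hh.comp continuous_fst))))
  have hRK : R ⊆ K := fun q hq => ⟨hq.1.le, hq.2.1.le, hq.2.2.1.le, hq.2.2.2.le⟩
  have hKR : K ∩ Tᶜ ⊆ R := by
    rintro ⟨s, y⟩ ⟨⟨h1, h2, h3, h4⟩, hT⟩
    simp only at h1 h2 h3 h4
    have hyg : y ≠ g s := by rintro rfl; exact hT (hgT s ⟨h1, h2⟩)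
    have hyh : y ≠ h s := by rintro rfl; exact hT (hhT s ⟨h1, h2⟩)
    have h3' : g s < y := lt_of_le_of_ne h3 hyg.symm
    have h4' : y < h s := lt_of_le_of_ne h4 hyh
    refine ⟨lt_of_le_of_ne h1 ?_, lt_of_le_of_ne h2 ?_, h3', h4'⟩
    · rintro rfl; exact (h3'.trans h4').ne hα
    · rintro rfl; exact (h3'.trans h4').ne hβ
  have hsub : connectedComponentIn Tᶜ p ⊆ K := by
    refine (isPreconnected_connectedComponentIn.subset_left_of_subset_union hRo
      hKc.isOpen_compl ?_ ?_ ?_).trans hRK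
    · exact Set.disjoint_left.2 fun q hq hq' => hq' (hRK hq)
    · intro q hq
      by_cases hqK : q ∈ K
      · exact Or.inl (hKR ⟨hqK, connectedComponentIn_subset _ _ hq⟩)
      · exact Or.inr hqK
    · exact ⟨p, mem_connectedComponentIn hp, hKR ⟨⟨hpα, hpβ, hgp.le, hph.le⟩, hp⟩⟩
  obtain ⟨m, hm⟩ := (isCompact_Icc (a := α) (b := β)).bddBelow_image hg.continuousOn
  obtain ⟨M, hM⟩ := (isCompact_Icc (a := α) (b := β)).bddAbove_image hh.continuousOn
  refine ((Metric.isBounded_Icc α β).prod (Metric.isBounded_Icc m M)).subset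
    (hsub.trans fun q hq => ?_)
  exact ⟨⟨hq.1, hq.2.1⟩, (hm ⟨q.1, ⟨hq.1, hq.2.1⟩, rfl⟩).trans hq.2.2.1,
    hq.2.2.2.trans (hM ⟨q.1, ⟨hq.1, hq.2.1⟩, rfl⟩)⟩

/-- If the component of `p` in `Uᶜ` is bounded, then `U` meets every unbounded preconnected set
through `p`. -/
theorem exists_mem_of_isBounded_connectedComponentIn {U S : Set (ℝ × ℝ)} {p : ℝ × ℝ}
    (hb : Bornology.IsBounded (connectedComponentIn Uᶜ p)) (hS : IsPreconnected S) (hpS : p ∈ S)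
    (hSb : ¬ Bornology.IsBounded S) : ∃ q ∈ S, q ∈ U := by
  by_contra! hcon
  exact hSb (hb.subset (hS.subset_connectedComponentIn hpS hcon))

theorem not_isBounded_vertical {t : ℝ} {I : Set ℝ} (hI : ¬ Bornology.IsBounded I) :
    ¬ Bornology.IsBounded (({t} : Set ℝ) ×ˢ I) := fun hb =>
  hI (hb.image_snd.subset fun y hy => ⟨(t, y), ⟨rfl, hy⟩, rfl⟩)

namespace XMonotoneDrawing

variable {n : ℕ} (D : XMonotoneDrawing n)

theorem mem_arcUnion {q : ℝ × ℝ} :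
    q ∈ D.arcUnion ↔ ∃ i j : Fin n, i < j ∧ q ∈ D.edgeArc i j := by
  simp [arcUnion]

/-- Every edge function extends to a continuous function on the whole line. -/
theorem exists_continuous_extension {i j : Fin n} (hij : i < j) :
    ∃ f : ℝ → ℝ, Continuous f ∧ ∀ t ∈ Set.Icc (D.x i) (D.x j), f t = D.e i j t := by
  have hle : D.x i ≤ D.x j := (D.x_strictMono hij).le
  refine ⟨Set.IccExtend hle ((Set.Icc (D.x i) (D.x j)).domRestrict (D.e i j)),
    (continuousOn_iff_continuous_domRestrict.1 (D.cont i j hij)).Icc_extend', fun t ht => ?_⟩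
  rw [Set.IccExtend_of_mem _ _ ht, Set.domRestrict_apply]

/-- The path `a, b, c` extends to a continuous function on the whole line. -/
theorem exists_continuous_path {a b c : Fin n} (hab : a < b) (hbc : b < c) :
    ∃ f : ℝ → ℝ, Continuous f ∧ (∀ t ∈ Set.Icc (D.x a) (D.x b), f t = D.e a b t) ∧
      ∀ t ∈ Set.Icc (D.x b) (D.x c), f t = D.e b c t := by
  obtain ⟨f, hf, hfe⟩ := D.exists_continuous_extension hab
  obtain ⟨g, hg, hge⟩ := D.exists_continuous_extension hbc
  have hxab := (D.x_strictMono hab).le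
  have hxbc := (D.x_strictMono hbc).le
  have hb : f (D.x b) = g (D.x b) := by
    rw [hfe _ ⟨hxab, le_rfl⟩, hge _ ⟨le_rfl, hxbc⟩, D.end_right a b hab, D.end_left b c hbc]
  refine ⟨fun t => if t ≤ D.x b then f t else g t,
    Continuous.if_le hf hg continuous_id continuous_const ?_, ?_, ?_⟩
  · rintro t rfl; exact hb
  · intro t ht
    simp only [if_pos ht.2, hfe t ht]
  · intro t ht
    rcases ht.1.eq_or_lt with rfl | hlt
    · simp only [le_refl, if_true, hb, hge _ ht]
    · simp only [if_neg hlt.not_ge, hge t ht]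

/-- The three edges of the triangle `a, b, c`. -/
def triangle (a b c : Fin n) : Set (ℝ × ℝ) :=
  D.edgeArc a b ∪ D.edgeArc b c ∪ D.edgeArc a c

theorem triangle_subset_arcUnion {a b c : Fin n} (hab : a < b) (hbc : b < c) :
    D.triangle a b c ⊆ D.arcUnion := by
  rintro q ((hq | hq) | hq)
  · exact D.mem_arcUnion.2 ⟨a, b, hab, hq⟩
  · exact D.mem_arcUnion.2 ⟨b, c, hbc, hq⟩
  · exact D.mem_arcUnion.2 ⟨a, c, hab.trans hbc, hq⟩

/-- A point strictly between the path `a, b, c` and the edge `a, c` lies in a bounded component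
of the complement of the triangle `a, b, c`. -/
theorem isBounded_triangle_component {a b c : Fin n} (hab : a < b) (hbc : b < c) {p : ℝ × ℝ}
    (hp : p ∉ D.triangle a b c) {y : ℝ}
    (hy : p.1 ∈ Set.Icc (D.x a) (D.x b) ∧ y = D.e a b p.1 ∨
      p.1 ∈ Set.Icc (D.x b) (D.x c) ∧ y = D.e b c p.1)
    (hbetween : y < p.2 ∧ p.2 < D.e a c p.1 ∨ D.e a c p.1 < p.2 ∧ p.2 < y) :
    Bornology.IsBounded (connectedComponentIn (D.triangle a b c)ᶜ p) := by
  have hac := hab.trans hbc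
  have hxab := (D.x_strictMono hab).le
  have hxbc := (D.x_strictMono hbc).le
  obtain ⟨g, hg, hgab, hgbc⟩ := D.exists_continuous_path hab hbc
  obtain ⟨h, hh, hhac⟩ := D.exists_continuous_extension hac
  have hgT : ∀ t ∈ Set.Icc (D.x a) (D.x c), (t, g t) ∈ D.triangle a b c := by
    intro t ht
    rcases le_total t (D.x b) with htb | htb
    · exact Or.inl (Or.inl ⟨ht.1, htb, hgab t ⟨ht.1, htb⟩⟩)
    · exact Or.inl (Or.inr ⟨htb, ht.2, hgbc t ⟨htb, ht.2⟩⟩)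
  have hhT : ∀ t ∈ Set.Icc (D.x a) (D.x c), (t, h t) ∈ D.triangle a b c :=
    fun t ht => Or.inr ⟨ht.1, ht.2, hhac t ht⟩
  have hα : g (D.x a) = h (D.x a) := by
    rw [hgab _ ⟨le_rfl, hxab⟩, hhac _ ⟨le_rfl, hxab.trans hxbc⟩, D.end_left a b hab,
      D.end_left a c hac]
  have hβ : g (D.x c) = h (D.x c) := by
    rw [hgbc _ ⟨hxbc, le_rfl⟩, hhac _ ⟨hxab.trans hxbc, le_rfl⟩, D.end_right b c hbc,
      D.end_right a c hac]
  have hpac : p.1 ∈ Set.Icc (D.x a) (D.x c) := by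
    rcases hy with ⟨hm, -⟩ | ⟨hm, -⟩
    · exact ⟨hm.1, hm.2.trans hxbc⟩
    · exact ⟨hxab.trans hm.1, hm.2⟩
  have hgp : g p.1 = y := by
    rcases hy with ⟨hm, rfl⟩ | ⟨hm, rfl⟩
    · exact hgab _ hm
    · exact hgbc _ hm
  rw [← hgp, ← hhac _ hpac] at hbetween
  rcases hbetween with ⟨h1, h2⟩ | ⟨h1, h2⟩
  · exact isBounded_connectedComponentIn_of_between hg hh hα hβ hgT hhT hp hpac.1 hpac.2 h1 h2
  · exact isBounded_connectedComponentIn_of_between hh hg hα.symm hβ.symm hhT hgT hp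
      hpac.1 hpac.2 h1 h2

/-- A point in a bounded face has an edge strictly above and an edge strictly below it. -/
theorem exists_edge_above_and_below {p : ℝ × ℝ} (hp : p ∉ D.arcUnion)
    (hb : Bornology.IsBounded (connectedComponentIn (D.arcUnion)ᶜ p)) :
    (∃ i j : Fin n, i < j ∧ p.1 ∈ Set.Icc (D.x i) (D.x j) ∧ p.2 < D.e i j p.1) ∧
      ∃ i j : Fin n, i < j ∧ p.1 ∈ Set.Icc (D.x i) (D.x j) ∧ D.e i j p.1 < p.2 := by
  have key : ∀ I : Set ℝ, IsPreconnected I → p.2 ∈ I → ¬ Bornology.IsBounded I →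
      ∃ i j : Fin n, i < j ∧ p.1 ∈ Set.Icc (D.x i) (D.x j) ∧ D.e i j p.1 ∈ I ∧
        D.e i j p.1 ≠ p.2 := by
    intro I hI hpI hIb
    obtain ⟨⟨s, y⟩, ⟨hs, hyI⟩, hqU⟩ := exists_mem_of_isBounded_connectedComponentIn hb
      (isPreconnected_singleton.prod hI) ⟨rfl, hpI⟩ (not_isBounded_vertical (t := p.1) hIb)
    obtain ⟨i, j, hij, h1, h2, h3⟩ := D.mem_arcUnion.1 hqU
    simp only [Set.mem_singleton_iff] at hs h1 h2 h3 hyI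
    subst hs
    exact ⟨i, j, hij, ⟨h1, h2⟩, h3 ▸ hyI,
      fun h => hp (D.mem_arcUnion.2 ⟨i, j, hij, h1, h2, h.symm⟩)⟩
  constructor
  · obtain ⟨i, j, hij, hm, hI, hne⟩ := key (Set.Ici p.2) isPreconnected_Ici Set.self_mem_Ici
      fun h => not_bddAbove_Ici _ h.bddAbove
    exact ⟨i, j, hij, hm, lt_of_le_of_ne hI hne.symm⟩
  · obtain ⟨i, j, hij, hm, hI, hne⟩ := key (Set.Iic p.2) isPreconnected_Iic Set.self_mem_Iic
      fun h => not_bddBelow_Iic _ h.bddBelow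
    exact ⟨i, j, hij, hm, lt_of_le_of_ne hI hne⟩

/-- A point off the drawing that lies on the vertical line of a vertex, strictly between that vertex
and an edge, lies in the interior of a triangle. -/
theorem exists_triangle_of_vertex_line {p : ℝ × ℝ} (hp : p ∉ D.arcUnion) {i m j : Fin n}
    (hij : i < j) (hm : p.1 = D.x m) (hmij : p.1 ∈ Set.Icc (D.x i) (D.x j))
    (hbetween : 0 < p.2 ∧ p.2 < D.e i j p.1 ∨ D.e i j p.1 < p.2 ∧ p.2 < 0) :
    ∃ a b c : Fin n, a < b ∧ b < c ∧ p ∉ D.triangle a b c ∧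
      Bornology.IsBounded (connectedComponentIn (D.triangle a b c)ᶜ p) := by
  have hne : D.e i j p.1 ≠ 0 := by
    rcases hbetween with ⟨h1, h2⟩ | ⟨h1, h2⟩
    · exact (h1.trans h2).ne'
    · exact (h1.trans h2).ne
  rw [hm] at hne hmij
  have him : i < m := lt_of_le_of_ne (D.x_strictMono.le_iff_le.1 hmij.1) <| by
    rintro rfl; exact hne (D.end_left i j hij)
  have hmj : m < j := lt_of_le_of_ne (D.x_strictMono.le_iff_le.1 hmij.2) <| by
    rintro rfl; exact hne (D.end_right i m hij)
  have hpT := fun h => hp (D.triangle_subset_arcUnion him hmj h)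
  refine ⟨i, m, j, him, hmj, hpT, D.isBounded_triangle_component him hmj hpT (y := 0) ?_ hbetween⟩
  exact Or.inl ⟨⟨hm ▸ hmij.1, hm.le⟩, by rw [hm, D.end_right i m him]⟩

/-- A point off the drawing separating two edges with a common left endpoint lies in the interior
of a triangle. -/
theorem exists_triangle_of_common_left {p : ℝ × ℝ} (hp : p ∉ D.arcUnion) {i j l : Fin n}
    (hij : i < j) (hil : i < l) (hpi : D.x i ≤ p.1) (hpj : p.1 ≤ D.x j) (hpl : p.1 ≤ D.x l)
    (hj : p.2 < D.e i j p.1) (hl : D.e i l p.1 < p.2) :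
    ∃ a b c : Fin n, a < b ∧ b < c ∧ p ∉ D.triangle a b c ∧
      Bornology.IsBounded (connectedComponentIn (D.triangle a b c)ᶜ p) := by
  rcases lt_trichotomy j l with h | rfl | h
  · have hpT := fun hT => hp (D.triangle_subset_arcUnion hij h hT)
    exact ⟨i, j, l, hij, h, hpT, D.isBounded_triangle_component hij h hpT
      (Or.inl ⟨⟨hpi, hpj⟩, rfl⟩) (Or.inr ⟨hl, hj⟩)⟩
  · exact absurd (hl.trans hj) (lt_irrefl _)
  · have hpT := fun hT => hp (D.triangle_subset_arcUnion hil h hT)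
    exact ⟨i, l, j, hil, h, hpT, D.isBounded_triangle_component hil h hpT
      (Or.inl ⟨⟨hpi, hpl⟩, rfl⟩) (Or.inl ⟨hl, hj⟩)⟩

/-- A point off the drawing separating two edges with a common right endpoint lies in the interior
of a triangle. -/
theorem exists_triangle_of_common_right {p : ℝ × ℝ} (hp : p ∉ D.arcUnion) {i k l : Fin n}
    (hil : i < l) (hkl : k < l) (hpi : D.x i ≤ p.1) (hpk : D.x k ≤ p.1) (hpl : p.1 ≤ D.x l)
    (hi : p.2 < D.e i l p.1) (hk : D.e k l p.1 < p.2) :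
    ∃ a b c : Fin n, a < b ∧ b < c ∧ p ∉ D.triangle a b c ∧
      Bornology.IsBounded (connectedComponentIn (D.triangle a b c)ᶜ p) := by
  rcases lt_trichotomy i k with h | rfl | h
  · have hpT := fun hT => hp (D.triangle_subset_arcUnion h hkl hT)
    exact ⟨i, k, l, h, hkl, hpT, D.isBounded_triangle_component h hkl hpT
      (Or.inr ⟨⟨hpk, hpl⟩, rfl⟩) (Or.inl ⟨hk, hi⟩)⟩
  · exact absurd (hk.trans hi) (lt_irrefl _)
  · have hpT := fun hT => hp (D.triangle_subset_arcUnion h hil hT)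
    exact ⟨k, i, l, h, hil, hpT, D.isBounded_triangle_component h hil hpT
      (Or.inr ⟨⟨hpi, hpl⟩, rfl⟩) (Or.inr ⟨hk, hi⟩)⟩

/-- Every point of a bounded face lies in the interior of a triangle. -/
theorem exists_triangle_of_isBounded {p : ℝ × ℝ} (hp : p ∉ D.arcUnion)
    (hb : Bornology.IsBounded (connectedComponentIn (D.arcUnion)ᶜ p)) :
    ∃ a b c : Fin n, a < b ∧ b < c ∧ p ∉ D.triangle a b c ∧
      Bornology.IsBounded (connectedComponentIn (D.triangle a b c)ᶜ p) := by
  obtain ⟨⟨i, j, hij, hpij, habove⟩, ⟨k, l, hkl, hpkl, hbelow⟩⟩ :=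
    D.exists_edge_above_and_below hp hb
  by_cases hv : ∃ m, p.1 = D.x m
  · obtain ⟨m, hm⟩ := hv
    rcases lt_trichotomy p.2 0 with h | h | h
    · exact D.exists_triangle_of_vertex_line hp hkl hm hpkl (Or.inr ⟨hbelow, h⟩)
    · refine absurd (D.mem_arcUnion.2 ?_) hp
      rcases lt_or_ge i m with him | hmi
      · exact ⟨i, m, him, hpij.1, hm.le, by rw [h, hm, D.end_right i m him]⟩
      · have hmj := hmi.trans_lt hij
        exact ⟨m, j, hmj, hm.ge, hpij.2, by rw [h, hm, D.end_left m j hmj]⟩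
    · exact D.exists_triangle_of_vertex_line hp hij hm hpij (Or.inl ⟨h, habove⟩)
  · have hil : i < l := D.x_strictMono.lt_iff_lt.1 <|
      lt_of_le_of_ne hpij.1 (fun h => hv ⟨i, h.symm⟩) |>.trans_le hpkl.2
    rcases lt_trichotomy (D.e i l p.1) p.2 with h | h | h
    · exact D.exists_triangle_of_common_left hp hij hil hpij.1 hpij.2 hpkl.2 habove h
    · exact absurd (D.mem_arcUnion.2 ⟨i, l, hil, hpij.1, hpkl.2, h.symm⟩) hp
    · exact D.exists_triangle_of_common_right hp hil hkl hpij.1 hpkl.1 hpkl.2 h hbelow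

end XMonotoneDrawing

/-- (Carathéodory's theorem for simple x-monotone drawings of complete
graphs.) Let `n ≥ 3`, let `D` be a simple x-monotone drawing of `K n`, let `U` be the
union of all its edge arcs, and let `x` be a point outside `U` whose connected component
in the complement of `U` is bounded. Then there are indices `a < b < c` such that `x`
lies in a bounded connected component of the complement of the triangle
`T = edgeArc a b ∪ edgeArc b c ∪ edgeArc a c`. -/
theorem caratheodory_for_simple_monotone_drawings (n : ℕ) (hn : 3 ≤ n)
    (D : XMonotoneDrawing n) (hD : D.Simple) (x : ℝ × ℝ)
    (hx : x ∉ D.arcUnion)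
    (hb : Bornology.IsBounded (connectedComponentIn (D.arcUnion)ᶜ x)) :
    ∃ a b c : Fin n, a < b ∧ b < c ∧
      x ∉ (D.edgeArc a b ∪ D.edgeArc b c ∪ D.edgeArc a c) ∧
      Bornology.IsBounded
        (connectedComponentIn (D.edgeArc a b ∪ D.edgeArc b c ∪ D.edgeArc a c)ᶜ x) := by
  exact D.exists_triangle_of_isBounded hx hb
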